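/- Bayesian log-odds update from a verifying retraction (equation for retractions with log(α) = 0): in the truth-or-noise model, for every realization (σ₁,…,σ_t) ∈ {−1,1}^t and every τ ∈ {1,…,t}, ℓ( P(θ = 1 | s₁ = σ₁,…,s_t = σ_t, n_τ = 1) ) = ℓ( P(θ = 1 | s₁ = σ₁,…,s_t = σ_t) ) − σ_τ · log( q/(1−q) ), where q = 1 − ν/2. That is, a retraction of observation τ subtracts from the log-odds exactly the log-likelihood contribution of the retracted observation. -/

import Mathlib

/-!
Conditionally on the state, the pairs `(n_j, ε_j)` are independent, so the posterior odds factor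
over the periods. An observation `σ_j` contributes the factor `(q / (1 - q)) ^ σ_j`. If it is
retracted, observing `σ_j` and `n_j = 1` has conditional probability `ν / 2` in both states, so the
factor is `1`. Hence the log-odds given retractions of the observations in `S` is
`∑ j ∉ S, σ_j log (q / (1 - q))`.
-/

open scoped BigOperators

/-- Sample space of the truth-or-noise model with `t` observations:
a state bit `θ` together with, for each period, a noise indicator bit `n_j`
and a noise-value bit `ε_j`. -/
abbrev Omega (t : ℕ) := Bool × (Fin t → Bool × Bool)

/-- Encode a bit as a sign in `{-1, 1}`. -/
def toSign (x : Bool) : ℤ := if x then 1 else -1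

/-- Atom weight of the product PMF realizing the truth-or-noise model:
`θ` is uniform on `{-1,1}`, the noise indicators `n_j` are i.i.d. Bernoulli(ν),
the noise values `ε_j` are i.i.d. uniform on `{-1,1}`, all mutually
independent. -/
noncomputable def weight {t : ℕ} (ν : ℝ) (ω : Omega t) : ℝ :=
  (1 / 2) * ∏ j : Fin t, ((if (ω.2 j).1 then ν else 1 - ν) * (1 / 2))

/-- Probability of an event in the truth-or-noise model. -/
noncomputable def prob {t : ℕ} (ν : ℝ) (A : Set (Omega t)) : ℝ :=
  ∑ ω : Omega t, Set.indicator A (weight ν) ω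

/-- Conditional probability `P(A | B)` in the truth-or-noise model. -/
noncomputable def condProb {t : ℕ} (ν : ℝ) (A B : Set (Omega t)) : ℝ :=
  prob ν (A ∩ B) / prob ν B

/-- The state `θ ∈ {-1, 1}`. -/
def stateVal {t : ℕ} (ω : Omega t) : ℤ := toSign ω.1

/-- The noise indicator `n_j` (`true` means observation `j` is noise). -/
def noiseVal {t : ℕ} (j : Fin t) (ω : Omega t) : Bool := (ω.2 j).1

/-- The observation `s_j = (1 - n_j)·θ + n_j·ε_j ∈ {-1, 1}`. -/
def obsVal {t : ℕ} (j : Fin t) (ω : Omega t) : ℤ :=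
  if (ω.2 j).1 then toSign (ω.2 j).2 else toSign ω.1

/-- Log-odds (logit) function `ℓ(p) = log (p / (1 - p))`. -/
noncomputable def logit (p : ℝ) : ℝ := Real.log (p / (1 - p))

section Events

variable {t : ℕ} (ν : ℝ)

lemma prob_inter_add_prob_compl_inter (A B : Set (Omega t)) :
    prob ν (A ∩ B) + prob ν (Aᶜ ∩ B) = prob ν B := by
  simp only [prob, ← Finset.sum_add_distrib, ← Set.indicator_indicator,
    Set.indicator_self_add_compl_apply]

lemma logit_condProb {ν : ℝ} {B : Set (Omega t)} (hB : prob ν B ≠ 0) (A : Set (Omega t)) :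
    logit (condProb ν A B) = Real.log (prob ν (A ∩ B) / prob ν (Aᶜ ∩ B)) := by
  rw [logit, condProb, one_sub_div hB, div_div_div_cancel_right₀ hB,
    ← prob_inter_add_prob_compl_inter ν A B, add_sub_cancel_left]

/-- The weight of one period's pair `(n_j, ε_j)`: the factor of period `j` in `weight`. -/
noncomputable def pairWeight (x : Bool × Bool) : ℝ :=
  (if x.1 then ν else 1 - ν) * (1 / 2)

/-- The probability that one period's pair `(n_j, ε_j)` lies in `A`. -/
noncomputable def pairProb (A : Set (Bool × Bool)) : ℝ :=
  ∑ x, A.indicator (pairWeight ν) x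

lemma indicator_weight_eq_prod (E : Fin t → Set (Bool × Bool)) (ω : Omega t) :
    {ω : Omega t | ∀ j, ω.2 j ∈ E j}.indicator (weight ν) ω
      = 1 / 2 * ∏ j, (E j).indicator (pairWeight ν) (ω.2 j) := by
  classical
  simp only [Set.indicator_apply, Set.mem_ofPred_eq, Finset.prod_ite_zero, Finset.mem_univ,
    forall_const, mul_ite, mul_zero, weight, pairWeight]

lemma prob_state_inter_forall_mem (b : Bool) (E : Fin t → Set (Bool × Bool)) :
    prob ν ({ω : Omega t | ω.1 = b} ∩ {ω | ∀ j, ω.2 j ∈ E j})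
      = 1 / 2 * ∏ j, pairProb ν (E j) := by
  rw [prob, Fintype.sum_prod_type, Fintype.sum_eq_single b]
  · simp only [← Set.indicator_indicator, Set.indicator_of_mem, Set.mem_ofPred_eq,
      indicator_weight_eq_prod, pairProb, Finset.prod_univ_sum, Fintype.piFinset_univ,
      Finset.mul_sum]
  · intro b' hb'
    exact Finset.sum_eq_zero fun f _ => Set.indicator_of_notMem (fun h => hb' h.1) _

end Events

/-- The observation produced by the state bit `b` and the pair `x = (n_j, ε_j)`. -/
def noisyObs (b : Bool) (x : Bool × Bool) : ℤ := if x.1 then toSign x.2 else toSign b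

/-- The pairs `(n_j, ε_j)` that yield the observation `s` in state `b` and, if the observation is
retracted (`r` holds), are noise. -/
def compatiblePairs (b : Bool) (s : ℤ) (r : Prop) : Set (Bool × Bool) :=
  {x | noisyObs b x = s ∧ (r → x.1 = true)}

/-- The event that the observations are `σ` and those in `S` are retracted. -/
def evidence {t : ℕ} (σ : Fin t → ℤ) (S : Finset (Fin t)) : Set (Omega t) :=
  {ω | ∀ j, obsVal j ω = σ j} ∩ {ω | ∀ j ∈ S, noiseVal j ω = true}

lemma prob_state_inter_evidence {t : ℕ} (ν : ℝ) (b : Bool) (σ : Fin t → ℤ) (S : Finset (Fin t)) :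
    prob ν ({ω | ω.1 = b} ∩ evidence σ S)
      = 1 / 2 * ∏ j, pairProb ν (compatiblePairs b (σ j) (j ∈ S)) := by
  have hset : {ω | ω.1 = b} ∩ evidence σ S
      = {ω : Omega t | ω.1 = b} ∩ {ω | ∀ j, ω.2 j ∈ compatiblePairs b (σ j) (j ∈ S)} := by
    ext ω
    simp only [evidence, Set.mem_inter_iff, Set.mem_ofPred_eq, ← forall_and]
    exact and_congr_right fun hb => hb ▸ Iff.rfl
  rw [hset, prob_state_inter_forall_mem]

lemma pairProb_compatiblePairs (ν : ℝ) (b : Bool) {s : ℤ} (hs : s = 1 ∨ s = -1) (r : Prop)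
    [Decidable r] :
    pairProb ν (compatiblePairs b s r) = ν / 2 + if ¬r ∧ toSign b = s then 1 - ν else 0 := by
  classical
  have hnoise : ∑ e, (compatiblePairs b s r).indicator (pairWeight ν) (true, e) = ν / 2 := by
    rcases hs with rfl | rfl <;>
      simp [Set.indicator_apply, compatiblePairs, noisyObs, pairWeight, toSign, div_eq_mul_inv]
  have htruth : ∑ e, (compatiblePairs b s r).indicator (pairWeight ν) (false, e)
      = if ¬r ∧ toSign b = s then 1 - ν else 0 := by
    by_cases hr : r <;> by_cases hb : toSign b = s <;>
      simp [compatiblePairs, noisyObs, pairWeight, hr, hb, mul_left_comm (2 : ℝ)]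
  rw [pairProb, Fintype.sum_prod_type, Fintype.sum_bool, hnoise, htruth]

/-- For `1 < ν` the weights are signed, but the likelihoods `1 - ν / 2` and `ν / 2` of an
observation stay positive. -/
lemma pairProb_compatiblePairs_pos {ν : ℝ} (hν₀ : 0 < ν) (hν₂ : ν < 2) (b : Bool) {s : ℤ}
    (hs : s = 1 ∨ s = -1) (r : Prop) : 0 < pairProb ν (compatiblePairs b s r) := by
  classical
  rw [pairProb_compatiblePairs ν b hs]
  split_ifs <;> linarith

lemma log_pairProb_compatiblePairs_ratio {ν : ℝ} (hν : ν ≠ 0) {s : ℤ} (hs : s = 1 ∨ s = -1)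
    (r : Prop) [Decidable r] :
    Real.log (pairProb ν (compatiblePairs true s r) / pairProb ν (compatiblePairs false s r))
      = if r then 0 else s * logit (1 - ν / 2) := by
  simp only [pairProb_compatiblePairs ν _ hs]
  by_cases hr : r
  · simp [hr, hν]
  · have hq : ν / 2 + (1 - ν) = 1 - ν / 2 := by ring
    rcases hs with rfl | rfl
    · simp [hr, hq, toSign, logit]
    · simp [hr, hq, toSign, logit, ← Real.log_inv]

section LogOdds

variable {t : ℕ} {ν : ℝ} {σ : Fin t → ℤ}

lemma prob_state_inter_evidence_pos (hν₀ : 0 < ν) (hν₂ : ν < 2) (hσ : ∀ j, σ j = 1 ∨ σ j = -1)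
    (b : Bool) (S : Finset (Fin t)) : 0 < prob ν ({ω | ω.1 = b} ∩ evidence σ S) := by
  rw [prob_state_inter_evidence]
  exact mul_pos one_half_pos
    (Finset.prod_pos fun j _ => pairProb_compatiblePairs_pos hν₀ hν₂ b (hσ j) _)

lemma logit_condProb_evidence (hν₀ : 0 < ν) (hν₂ : ν < 2) (hσ : ∀ j, σ j = 1 ∨ σ j = -1)
    (S : Finset (Fin t)) :
    logit (condProb ν {ω | stateVal ω = 1} (evidence σ S))
      = ∑ j ∈ Sᶜ, (σ j : ℝ) * logit (1 - ν / 2) := by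
  have htrue : {ω : Omega t | stateVal ω = 1} = {ω | ω.1 = true} := by
    ext ω
    simp [stateVal, toSign]
  have hfalse : {ω : Omega t | ω.1 = true}ᶜ = {ω | ω.1 = false} := by
    ext ω
    simp
  have hpos := prob_state_inter_evidence_pos hν₀ hν₂ hσ (S := S)
  have hevidence : prob ν (evidence σ S) ≠ 0 := by
    rw [← prob_inter_add_prob_compl_inter ν {ω | ω.1 = true}, hfalse]
    exact (add_pos (hpos true) (hpos false)).ne'
  have hpair (b : Bool) (j : Fin t) := pairProb_compatiblePairs_pos hν₀ hν₂ b (hσ j) (j ∈ S)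
  calc
    _ = Real.log (∏ j, pairProb ν (compatiblePairs true (σ j) (j ∈ S))
          / pairProb ν (compatiblePairs false (σ j) (j ∈ S))) := by
      rw [htrue, logit_condProb hevidence, hfalse, prob_state_inter_evidence,
        prob_state_inter_evidence, mul_div_mul_left _ _ one_half_pos.ne', Finset.prod_div_distrib]
    _ = ∑ j, if j ∈ S then 0 else (σ j : ℝ) * logit (1 - ν / 2) := by
      rw [Real.log_prod fun j _ => (div_pos (hpair true j) (hpair false j)).ne']
      simp only [log_pairProb_compatiblePairs_ratio hν₀.ne' (hσ _)]
    _ = _ := by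
      rw [Finset.sum_ite, Finset.sum_const_zero, zero_add, Finset.filter_notMem_eq_sdiff,
        Finset.compl_eq_univ_sdiff]

theorem bayesian_logodds_update_retraction_general (hν₀ : 0 < ν) (hν₂ : ν < 2)
    (hσ : ∀ j, σ j = 1 ∨ σ j = -1) (S : Finset (Fin t)) :
    logit (condProb ν {ω : Omega t | stateVal ω = 1}
        ({ω : Omega t | ∀ j, obsVal j ω = σ j} ∩ {ω : Omega t | ∀ j ∈ S, noiseVal j ω = true}))
      = logit (condProb ν {ω : Omega t | stateVal ω = 1} {ω : Omega t | ∀ j, obsVal j ω = σ j})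
        - ∑ j ∈ S, (σ j : ℝ) * logit (1 - ν / 2) := by
  have hempty : {ω : Omega t | ∀ j, obsVal j ω = σ j} = evidence σ ∅ := by
    simp [evidence]
  rw [← evidence, hempty, logit_condProb_evidence hν₀ hν₂ hσ, logit_condProb_evidence hν₀ hν₂ hσ,
    Finset.compl_empty, eq_sub_iff_add_eq, Finset.sum_compl_add_sum]

end LogOdds

/-- **Bayesian log-odds update from a verifying retraction** (equation for
retractions with `log α = 0`). In the truth-or-noise model, for every
realization `(σ₁,…,σ_t) ∈ {−1,1}^t` and every `τ ∈ {1,…,t}`,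
`ℓ(P(θ = 1 | s₁ = σ₁,…,s_t = σ_t, n_τ = 1))
  = ℓ(P(θ = 1 | s₁ = σ₁,…,s_t = σ_t)) − σ_τ·log(q/(1−q))`, where `q = 1 − ν/2`:
a retraction of observation `τ` subtracts from the log-odds exactly the
log-likelihood contribution of the retracted observation. -/
theorem bayesian_logodds_update_retraction
    (t : ℕ) (ν : ℝ) (hν : ν ∈ Set.Ioo (0:ℝ) 1)
    (σ : Fin t → ℤ) (hσ : ∀ j, σ j = 1 ∨ σ j = -1) (τ : Fin t) :
    logit (condProb ν {ω : Omega t | stateVal ω = 1}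
        ({ω : Omega t | ∀ j : Fin t, obsVal j ω = σ j}
          ∩ {ω : Omega t | noiseVal τ ω = true}))
      = logit (condProb ν {ω : Omega t | stateVal ω = 1}
          {ω : Omega t | ∀ j : Fin t, obsVal j ω = σ j})
        - (σ τ : ℝ) * Real.log ((1 - ν / 2) / (1 - (1 - ν / 2))) := by
  simpa only [logit, Finset.mem_singleton, forall_eq, Finset.sum_singleton] using
    bayesian_logodds_update_retraction_general hν.1 (hν.2.trans one_lt_two) hσ {τ}
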